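/- Every non-trivial 4-dimensional Hopf superalgebra over K whose even part has dimension 3 is isomorphic as a Hopf superalgebra to H₅ = K[x,y]/(x² + y² − 1, xy) with grading making x even and y odd (so A₀ = span{1, x, x²}, A₁ = span{y}), comultiplication Δ(x) = x ⊗ x − α y ⊗ y and Δ(y) = x ⊗ y + y ⊗ x, counit ε(x) = 1, ε(y) = 0, and antipode S(x) = x, S(y) = α y, where α ∈ K is a primitive fourth root of unity (α² = −1). -/

import Mathlib

open TensorProduct

section SuperDefs

variable (K A : Type*) [Field K] [Ring A] [Algebra K A]

/-- A superalgebra structure on the unital associative `K`-algebra `A`: a `ℤ/2ℤ`-grading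
`A = A₀ ⊕ A₁` of `K`-vector spaces with `1 ∈ A₀` and `Aᵢ · Aⱼ ⊆ A_{i+j mod 2}`. -/
structure SuperAlgebra where
  A₀ : Submodule K A
  A₁ : Submodule K A
  compl : IsCompl A₀ A₁
  one_mem : (1 : A) ∈ A₀
  mul_mem₀₀ : ∀ a ∈ A₀, ∀ b ∈ A₀, a * b ∈ A₀
  mul_mem₀₁ : ∀ a ∈ A₀, ∀ b ∈ A₁, a * b ∈ A₁
  mul_mem₁₀ : ∀ a ∈ A₁, ∀ b ∈ A₀, a * b ∈ A₁
  mul_mem₁₁ : ∀ a ∈ A₁, ∀ b ∈ A₁, a * b ∈ A₀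

namespace SuperAlgebra

variable {K A}

/-- The projection onto the even part along the odd part. -/
noncomputable def p₀ (S : SuperAlgebra K A) : A →ₗ[K] A :=
  S.A₀.subtype ∘ₗ Submodule.linearProjOfIsCompl S.A₀ S.A₁ S.compl

/-- The projection onto the odd part along the even part. -/
noncomputable def p₁ (S : SuperAlgebra K A) : A →ₗ[K] A :=
  S.A₁.subtype ∘ₗ Submodule.linearProjOfIsCompl S.A₁ S.A₀ S.compl.symm

/-- The superflip `τ : A ⊗ A → A ⊗ A`, `a ⊗ b ↦ (-1)^{|a||b|} b ⊗ a` on homogeneous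
elements. -/
noncomputable def τ (S : SuperAlgebra K A) : A ⊗[K] A →ₗ[K] A ⊗[K] A :=
  (TensorProduct.comm K A A).toLinearMap ∘ₗ
    (TensorProduct.map S.p₀ S.p₀ + TensorProduct.map S.p₀ S.p₁ +
      TensorProduct.map S.p₁ S.p₀ - TensorProduct.map S.p₁ S.p₁)

variable (K A) in
/-- Regrouping `(A ⊗ A) ⊗ (A ⊗ A) ≃ A ⊗ ((A ⊗ A) ⊗ A)`. -/
noncomputable def rearr : ((A ⊗[K] A) ⊗[K] (A ⊗[K] A)) ≃ₗ[K] (A ⊗[K] ((A ⊗[K] A) ⊗[K] A)) :=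
  (TensorProduct.assoc K A A (A ⊗[K] A)) ≪≫ₗ
    TensorProduct.congr (LinearEquiv.refl K A) (TensorProduct.assoc K A A A).symm

/-- The map `(μ ⊗ μ) ∘ (id ⊗ τ ⊗ id) : (A ⊗ A) ⊗ (A ⊗ A) → A ⊗ A`, i.e. the super
multiplication of `A ⊗ A`. -/
noncomputable def superBimul (S : SuperAlgebra K A) :
    ((A ⊗[K] A) ⊗[K] (A ⊗[K] A)) →ₗ[K] A ⊗[K] A :=
  TensorProduct.map (LinearMap.mul' K A) (LinearMap.mul' K A) ∘ₗ
    (rearr K A).symm.toLinearMap ∘ₗ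
    TensorProduct.map (LinearMap.id : A →ₗ[K] A)
      (TensorProduct.map S.τ (LinearMap.id : A →ₗ[K] A)) ∘ₗ
    (rearr K A).toLinearMap

/-- The even part of `A ⊗ A` for the total grading. -/
def evenTensor (S : SuperAlgebra K A) : Submodule K (A ⊗[K] A) :=
  LinearMap.range (TensorProduct.map S.A₀.subtype S.A₀.subtype) ⊔
    LinearMap.range (TensorProduct.map S.A₁.subtype S.A₁.subtype)

/-- The odd part of `A ⊗ A` for the total grading. -/
def oddTensor (S : SuperAlgebra K A) : Submodule K (A ⊗[K] A) :=
  LinearMap.range (TensorProduct.map S.A₀.subtype S.A₁.subtype) ⊔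
    LinearMap.range (TensorProduct.map S.A₁.subtype S.A₀.subtype)

end SuperAlgebra

/-- A superbialgebra over `K`: a superalgebra together with grading-preserving linear maps
`Δ : A → A ⊗ A` and `ε : A → K` satisfying coassociativity, counity, and compatibility
with the (super)algebra structure. -/
structure SuperBialgebra extends SuperAlgebra K A where
  Δ : A →ₗ[K] A ⊗[K] A
  ε : A →ₗ[K] K
  Δ_even : ∀ a ∈ A₀, Δ a ∈ toSuperAlgebra.evenTensor
  Δ_odd : ∀ a ∈ A₁, Δ a ∈ toSuperAlgebra.oddTensor
  ε_odd : ∀ a ∈ A₁, ε a = 0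
  coassoc : ∀ a : A,
    TensorProduct.assoc K A A A (TensorProduct.map Δ (LinearMap.id : A →ₗ[K] A) (Δ a)) =
      TensorProduct.map (LinearMap.id : A →ₗ[K] A) Δ (Δ a)
  counit_left : ∀ a : A,
    TensorProduct.lid K A (TensorProduct.map ε (LinearMap.id : A →ₗ[K] A) (Δ a)) = a
  counit_right : ∀ a : A,
    TensorProduct.rid K A (TensorProduct.map (LinearMap.id : A →ₗ[K] A) ε (Δ a)) = a
  Δ_one : Δ 1 = 1 ⊗ₜ[K] 1
  ε_one : ε 1 = 1
  ε_mul : ∀ a b : A, ε (a * b) = ε a * ε b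
  Δ_mul : ∀ a b : A, Δ (a * b) = toSuperAlgebra.superBimul (Δ a ⊗ₜ[K] Δ b)

/-- A Hopf superalgebra: a superbialgebra with a grading-preserving antipode `S`
satisfying `μ ∘ (S ⊗ id) ∘ Δ = μ ∘ (id ⊗ S) ∘ Δ = η ∘ ε`. -/
structure HopfSuperalgebra extends SuperBialgebra K A where
  antipode : A →ₗ[K] A
  antipode_even : ∀ a ∈ A₀, antipode a ∈ A₀
  antipode_odd : ∀ a ∈ A₁, antipode a ∈ A₁
  antipode_left : ∀ a : A,
    LinearMap.mul' K A (TensorProduct.map antipode (LinearMap.id : A →ₗ[K] A) (Δ a)) =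
      algebraMap K A (ε a)
  antipode_right : ∀ a : A,
    LinearMap.mul' K A (TensorProduct.map (LinearMap.id : A →ₗ[K] A) antipode (Δ a)) =
      algebraMap K A (ε a)

end SuperDefs


section Helpers

variable {K A : Type*} [Field K] [Ring A] [Algebra K A]

namespace SuperAlgebra

theorem p₀_even (S : SuperAlgebra K A) {a : A} (h : a ∈ S.A₀) : S.p₀ a = a := by
  have := Submodule.projectionOnto_apply_left S.compl ⟨a, h⟩
  simp only [p₀, LinearMap.comp_apply, Submodule.subtype_apply]
  exact congrArg Subtype.val this

theorem p₀_odd (S : SuperAlgebra K A) {a : A} (h : a ∈ S.A₁) : S.p₀ a = 0 := by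
  have := Submodule.projectionOnto_apply_right S.compl ⟨a, h⟩
  simp only [p₀, LinearMap.comp_apply, Submodule.subtype_apply]
  exact congrArg Subtype.val this

theorem p₁_odd (S : SuperAlgebra K A) {a : A} (h : a ∈ S.A₁) : S.p₁ a = a := by
  have := Submodule.projectionOnto_apply_left S.compl.symm ⟨a, h⟩
  simp only [p₁, LinearMap.comp_apply, Submodule.subtype_apply]
  exact congrArg Subtype.val this

theorem p₁_even (S : SuperAlgebra K A) {a : A} (h : a ∈ S.A₀) : S.p₁ a = 0 := by
  have := Submodule.projectionOnto_apply_right S.compl.symm ⟨a, h⟩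
  simp only [p₁, LinearMap.comp_apply, Submodule.subtype_apply]
  exact congrArg Subtype.val this

theorem p_add (S : SuperAlgebra K A) (a : A) : S.p₀ a + S.p₁ a = a := by
  obtain ⟨u, hu, v, hv, rfl⟩ := Submodule.mem_sup.1
    (S.compl.sup_eq_top ▸ Submodule.mem_top : a ∈ S.A₀ ⊔ S.A₁)
  simp [S.p₀_even hu, S.p₀_odd hv, S.p₁_even hu, S.p₁_odd hv]

theorem bimul_tmul (S : SuperAlgebra K A) (a b c d : A) :
    S.superBimul ((a ⊗ₜ[K] b) ⊗ₜ[K] (c ⊗ₜ[K] d)) =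
      (a * S.p₀ c) ⊗ₜ[K] (S.p₀ b * d) + (a * S.p₁ c) ⊗ₜ[K] (S.p₀ b * d)
       + (a * S.p₀ c) ⊗ₜ[K] (S.p₁ b * d) - (a * S.p₁ c) ⊗ₜ[K] (S.p₁ b * d) := by
  simp [superBimul, rearr, τ, TensorProduct.add_tmul, TensorProduct.tmul_add,
    TensorProduct.sub_tmul, TensorProduct.tmul_sub]

theorem bimul_b_even (S : SuperAlgebra K A) (a b c d : A) (hb : b ∈ S.A₀) :
    S.superBimul ((a ⊗ₜ[K] b) ⊗ₜ[K] (c ⊗ₜ[K] d)) = (a * c) ⊗ₜ[K] (b * d) := by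
  rw [bimul_tmul, S.p₀_even hb, S.p₁_even hb]
  conv_rhs => rw [← S.p_add c]
  simp [mul_add, TensorProduct.add_tmul]

theorem bimul_c_even (S : SuperAlgebra K A) (a b c d : A) (hc : c ∈ S.A₀) :
    S.superBimul ((a ⊗ₜ[K] b) ⊗ₜ[K] (c ⊗ₜ[K] d)) = (a * c) ⊗ₜ[K] (b * d) := by
  rw [bimul_tmul, S.p₀_even hc, S.p₁_even hc]
  conv_rhs => rw [← S.p_add b]
  simp [add_mul, TensorProduct.tmul_add]

theorem bimul_odd (S : SuperAlgebra K A) (a b c d : A) (hb : b ∈ S.A₁) (hc : c ∈ S.A₁) :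
    S.superBimul ((a ⊗ₜ[K] b) ⊗ₜ[K] (c ⊗ₜ[K] d)) = -((a * c) ⊗ₜ[K] (b * d)) := by
  rw [bimul_tmul, S.p₀_odd hc, S.p₁_odd hc, S.p₀_odd hb, S.p₁_odd hb]
  simp

end SuperAlgebra

/-- contraction of the right leg -/
noncomputable def rf (f : A →ₗ[K] K) : A ⊗[K] A →ₗ[K] A :=
  (TensorProduct.rid K A).toLinearMap ∘ₗ TensorProduct.map LinearMap.id f

/-- contraction of the left leg -/
noncomputable def lf (f : A →ₗ[K] K) : A ⊗[K] A →ₗ[K] A :=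
  (TensorProduct.lid K A).toLinearMap ∘ₗ TensorProduct.map f LinearMap.id

/-- contraction of both legs -/
noncomputable def bf (f f' : A →ₗ[K] K) : A ⊗[K] A →ₗ[K] K :=
  (TensorProduct.lid K K).toLinearMap ∘ₗ TensorProduct.map f f'

@[simp] theorem rf_tmul (f : A →ₗ[K] K) (a b : A) : rf f (a ⊗ₜ[K] b) = f b • a := by
  simp [rf]

@[simp] theorem lf_tmul (f : A →ₗ[K] K) (a b : A) : lf f (a ⊗ₜ[K] b) = f a • b := by
  simp [lf]

@[simp] theorem bf_tmul (f f' : A →ₗ[K] K) (a b : A) : bf f f' (a ⊗ₜ[K] b) = f a * f' b := by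
  simp [bf]

/-- A one-dimensional odd part, with a generator and the coordinate functional. -/
structure Fr (H : HopfSuperalgebra K A) (y : A) (f : A →ₗ[K] K) : Prop where
  hy : y ∈ H.A₁
  f0 : ∀ a ∈ H.A₀, f a = 0
  fy : f y = 1
  sp : ∀ a ∈ H.A₁, a = f a • y

namespace Fr

variable {H : HopfSuperalgebra K A} {y : A} {f : A →ₗ[K] K}

/-- Linear maps agreeing on `a ⊗ b` (even) and `y ⊗ y` agree on the even tensors. -/
theorem ext_even (F : Fr H y f) {M : Type*} [AddCommGroup M] [Module K M]
    (φ ψ : A ⊗[K] A →ₗ[K] M)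
    (h00 : ∀ a ∈ H.A₀, ∀ b ∈ H.A₀, φ (a ⊗ₜ[K] b) = ψ (a ⊗ₜ[K] b))
    (h11 : φ (y ⊗ₜ[K] y) = ψ (y ⊗ₜ[K] y)) {T : A ⊗[K] A} (hT : T ∈ H.evenTensor) :
    φ T = ψ T := by
  have : H.evenTensor ≤ LinearMap.eqLocus φ ψ := by
    refine sup_le ?_ ?_
    · rintro _ ⟨t, rfl⟩
      rw [LinearMap.mem_eqLocus]
      induction t with
      | zero => simp
      | tmul a b => simpa using h00 _ a.2 _ b.2
      | add u v hu hv => simp only [map_add, hu, hv]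
    · rintro _ ⟨t, rfl⟩
      rw [LinearMap.mem_eqLocus]
      induction t with
      | zero => simp
      | tmul a b =>
        simp only [TensorProduct.map_tmul, Submodule.subtype_apply]
        rw [F.sp a a.2, F.sp b b.2]
        simp only [← TensorProduct.smul_tmul', TensorProduct.tmul_smul, map_smul, h11]
      | add u v hu hv => simp only [map_add, hu, hv]
  exact this hT

theorem ext_odd (F : Fr H y f) {M : Type*} [AddCommGroup M] [Module K M]
    (φ ψ : A ⊗[K] A →ₗ[K] M)
    (h01 : ∀ a ∈ H.A₀, φ (a ⊗ₜ[K] y) = ψ (a ⊗ₜ[K] y))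
    (h10 : ∀ a ∈ H.A₀, φ (y ⊗ₜ[K] a) = ψ (y ⊗ₜ[K] a)) {T : A ⊗[K] A}
    (hT : T ∈ H.oddTensor) :
    φ T = ψ T := by
  have : H.oddTensor ≤ LinearMap.eqLocus φ ψ := by
    refine sup_le ?_ ?_
    · rintro _ ⟨t, rfl⟩
      rw [LinearMap.mem_eqLocus]
      induction t with
      | zero => simp
      | tmul a b =>
        simp only [TensorProduct.map_tmul, Submodule.subtype_apply]
        rw [F.sp b b.2]
        simp only [TensorProduct.tmul_smul, map_smul, h01 _ a.2]
      | add u v hu hv => simp only [map_add, hu, hv]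
    · rintro _ ⟨t, rfl⟩
      rw [LinearMap.mem_eqLocus]
      induction t with
      | zero => simp
      | tmul a b =>
        simp only [TensorProduct.map_tmul, Submodule.subtype_apply]
        rw [F.sp a a.2]
        simp only [← TensorProduct.smul_tmul', map_smul, h10 _ b.2]
      | add u v hu hv => simp only [map_add, hu, hv]
  exact this hT

/-- the left character -/
noncomputable def chi (y : A) (f : A →ₗ[K] K) : A →ₗ[K] K := f ∘ₗ LinearMap.mulRight K y
/-- the right character -/
noncomputable def psi (y : A) (f : A →ₗ[K] K) : A →ₗ[K] K := f ∘ₗ LinearMap.mulLeft K y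
/-- the odd-odd coefficient of the coproduct -/
noncomputable def sc (H : HopfSuperalgebra K A) (f : A →ₗ[K] K) : A →ₗ[K] K := bf f f ∘ₗ H.Δ
/-- left coefficient of the coproduct of the odd generator -/
noncomputable def gg (H : HopfSuperalgebra K A) (y : A) (f : A →ₗ[K] K) : A := rf f (H.Δ y)
/-- right coefficient of the coproduct of the odd generator -/
noncomputable def hh (H : HopfSuperalgebra K A) (y : A) (f : A →ₗ[K] K) : A := lf f (H.Δ y)

theorem chi_y (F : Fr H y f) : chi y f y = 0 := by
  simpa [chi] using F.f0 _ (H.mul_mem₁₁ _ F.hy _ F.hy)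
theorem psi_y (F : Fr H y f) : psi y f y = 0 := by
  simpa [psi] using F.f0 _ (H.mul_mem₁₁ _ F.hy _ F.hy)
theorem mul_y (F : Fr H y f) {a : A} (ha : a ∈ H.A₀) : a * y = chi y f a • y := by
  simpa [chi] using F.sp _ (H.mul_mem₀₁ _ ha _ F.hy)
theorem y_mul (F : Fr H y f) {a : A} (ha : a ∈ H.A₀) : y * a = psi y f a • y := by
  simpa [psi] using F.sp _ (H.mul_mem₁₀ _ F.hy _ ha)
theorem y_inj (F : Fr H y f) {a b : K} (h : a • y = b • y) : a = b := by
  have := congrArg f h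
  simpa [F.fy] using this
theorem chi_mul (F : Fr H y f) {a b : A} (ha : a ∈ H.A₀) (hb : b ∈ H.A₀) :
    chi y f (a * b) = chi y f a * chi y f b := by
  apply F.y_inj
  rw [← F.mul_y (H.mul_mem₀₀ _ ha _ hb), mul_assoc, F.mul_y hb, mul_smul_comm, F.mul_y ha,
    smul_smul, mul_comm]
theorem chi_one (F : Fr H y f) : chi y f 1 = 1 := by simp [chi, F.fy]
theorem yy_even (F : Fr H y f) : y * y ∈ H.A₀ := H.mul_mem₁₁ _ F.hy _ F.hy
theorem mul_yy (F : Fr H y f) {a : A} (ha : a ∈ H.A₀) : a * (y * y) = chi y f a • (y * y) := by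
  rw [← mul_assoc, F.mul_y ha, smul_mul_assoc]
theorem yy_mul (F : Fr H y f) {a : A} (ha : a ∈ H.A₀) : (y * y) * a = psi y f a • (y * y) := by
  rw [mul_assoc, F.y_mul ha, mul_smul_comm]

theorem rf_even (F : Fr H y f) {T : A ⊗[K] A} (hT : T ∈ H.evenTensor) :
    rf f T = bf f f T • y := by
  refine F.ext_even (rf f) ((LinearMap.toSpanSingleton K A y) ∘ₗ bf f f) ?_ ?_ hT
  · intro a ha b hb; simp [F.f0 a ha, F.f0 b hb]
  · simp [F.fy]

theorem lf_even (F : Fr H y f) {T : A ⊗[K] A} (hT : T ∈ H.evenTensor) :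
    lf f T = bf f f T • y := by
  refine F.ext_even (lf f) ((LinearMap.toSpanSingleton K A y) ∘ₗ bf f f) ?_ ?_ hT
  · intro a ha b hb; simp [F.f0 a ha, F.f0 b hb]
  · simp [F.fy]

theorem odd_eq (F : Fr H y f) {T : A ⊗[K] A} (hT : T ∈ H.oddTensor) :
    T = rf f T ⊗ₜ[K] y + y ⊗ₜ[K] lf f T := by
  refine F.ext_odd LinearMap.id ((TensorProduct.mk K A A).flip y ∘ₗ rf f +
    TensorProduct.mk K A A y ∘ₗ lf f) ?_ ?_ hT
  · intro a ha; simp [F.f0 a ha, F.fy]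
  · intro a ha; simp [F.f0 a ha, F.fy]

theorem rf_odd_mem (F : Fr H y f) {T : A ⊗[K] A} (hT : T ∈ H.oddTensor) : rf f T ∈ H.A₀ := by
  have := F.ext_odd (H.A₀.mkQ ∘ₗ rf f) 0 ?_ ?_ hT
  · simpa using this
  · intro a ha; simp [F.fy, ha]
  · intro a ha; simp [F.f0 a ha]

theorem lf_odd_mem (F : Fr H y f) {T : A ⊗[K] A} (hT : T ∈ H.oddTensor) : lf f T ∈ H.A₀ := by
  have := F.ext_odd (H.A₀.mkQ ∘ₗ lf f) 0 ?_ ?_ hT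
  · simpa using this
  · intro a ha; simp [F.f0 a ha]
  · intro a ha; simp [F.fy, ha]

theorem g_mem (F : Fr H y f) : gg H y f ∈ H.A₀ := F.rf_odd_mem (H.Δ_odd _ F.hy)
theorem h_mem (F : Fr H y f) : hh H y f ∈ H.A₀ := F.lf_odd_mem (H.Δ_odd _ F.hy)
theorem Δ_y (F : Fr H y f) : H.Δ y = gg H y f ⊗ₜ[K] y + y ⊗ₜ[K] hh H y f :=
  F.odd_eq (H.Δ_odd _ F.hy)

theorem coassoc_y (F : Fr H y f) :
    TensorProduct.assoc K A A A (H.Δ (gg H y f) ⊗ₜ[K] y) + gg H y f ⊗ₜ[K] (y ⊗ₜ[K] hh H y f)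
      + y ⊗ₜ[K] (hh H y f ⊗ₜ[K] hh H y f)
     = gg H y f ⊗ₜ[K] (gg H y f ⊗ₜ[K] y) + gg H y f ⊗ₜ[K] (y ⊗ₜ[K] hh H y f)
      + y ⊗ₜ[K] H.Δ (hh H y f) := by
  have := H.coassoc y
  rw [F.Δ_y] at this
  simp only [map_add, TensorProduct.map_tmul, LinearMap.id_apply] at this
  rw [F.Δ_y] at this
  simp only [TensorProduct.add_tmul, TensorProduct.tmul_add, map_add,
    TensorProduct.assoc_tmul] at this
  rw [← add_assoc] at this
  exact this

/-- evaluation of the last of three legs -/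
noncomputable def e3 (f : A →ₗ[K] K) : A ⊗[K] (A ⊗[K] A) →ₗ[K] A ⊗[K] A :=
  TensorProduct.map LinearMap.id (rf f)
/-- evaluation of the first of three legs -/
noncomputable def e1 (f : A →ₗ[K] K) : A ⊗[K] (A ⊗[K] A) →ₗ[K] A ⊗[K] A :=
  (TensorProduct.lid K _).toLinearMap ∘ₗ TensorProduct.map f LinearMap.id

theorem e3_assoc (f : A →ₗ[K] K) (T : A ⊗[K] A) (b : A) :
    e3 f (TensorProduct.assoc K A A A (T ⊗ₜ[K] b)) = f b • T := by
  induction T with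
  | zero => simp
  | tmul u v => simp [e3]
  | add u v hu hv => simp only [TensorProduct.add_tmul, map_add, hu, hv, smul_add]

theorem e1_assoc (f : A →ₗ[K] K) (T : A ⊗[K] A) (b : A) :
    e1 f (TensorProduct.assoc K A A A (T ⊗ₜ[K] b)) = lf f T ⊗ₜ[K] b := by
  induction T with
  | zero => simp
  | tmul u v => simp [e1, TensorProduct.smul_tmul']
  | add u v hu hv => simp only [TensorProduct.add_tmul, map_add, hu, hv]

theorem Δ_g' (F : Fr H y f) : H.Δ (gg H y f) = gg H y f ⊗ₜ[K] gg H y f +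
    sc H f (hh H y f) • (y ⊗ₜ[K] y) := by
  have := congrArg (e3 f) F.coassoc_y
  simp only [map_add, e3_assoc] at this
  simp only [e3, TensorProduct.map_tmul, rf_tmul, F.fy, F.f0 _ F.h_mem,
    F.rf_even (H.Δ_even _ F.h_mem), LinearMap.id_apply, one_smul, zero_smul,
    TensorProduct.tmul_zero, add_zero, TensorProduct.tmul_smul] at this
  exact this

theorem Δ_h' (F : Fr H y f) : H.Δ (hh H y f) = hh H y f ⊗ₜ[K] hh H y f +
    sc H f (gg H y f) • (y ⊗ₜ[K] y) := by
  have := congrArg (e1 f) F.coassoc_y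
  simp only [map_add, e1_assoc] at this
  simp only [e1, TensorProduct.map_tmul, LinearMap.comp_apply, LinearEquiv.coe_coe,
    TensorProduct.lid_tmul, F.fy, F.f0 _ F.g_mem,
    F.lf_even (H.Δ_even _ F.g_mem), LinearMap.id_apply, one_smul, zero_smul,
    add_zero, zero_add, TensorProduct.smul_tmul'] at this
  rw [← this, add_comm]
  simp [sc, TensorProduct.smul_tmul']

theorem sc_hg (F : Fr H y f) : sc H f (hh H y f) = sc H f (gg H y f) := by
  have := congrArg (bf f f) F.Δ_h'
  simpa [F.f0 _ F.h_mem, F.fy, sc] using this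

theorem Δ_g (F : Fr H y f) : H.Δ (gg H y f) = gg H y f ⊗ₜ[K] gg H y f +
    sc H f (gg H y f) • (y ⊗ₜ[K] y) := by rw [F.Δ_g', F.sc_hg]

theorem ε_g (F : Fr H y f) : H.ε (gg H y f) = 1 := by
  have := H.counit_left y
  rw [F.Δ_y] at this
  simp [H.ε_odd _ F.hy] at this
  exact F.y_inj (by simpa using this)

theorem ε_h (F : Fr H y f) : H.ε (hh H y f) = 1 := by
  have := H.counit_right y
  rw [F.Δ_y] at this
  simp [H.ε_odd _ F.hy] at this
  exact F.y_inj (by simpa using this)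

theorem Δ_yy (F : Fr H y f) : H.Δ (y * y) =
    (gg H y f * gg H y f) ⊗ₜ[K] (y * y) + (y * y) ⊗ₜ[K] (hh H y f * hh H y f) +
    (psi y f (gg H y f) * chi y f (hh H y f) - chi y f (gg H y f) * psi y f (hh H y f)) •
      (y ⊗ₜ[K] y) := by
  rw [H.Δ_mul, F.Δ_y]
  simp only [TensorProduct.add_tmul, TensorProduct.tmul_add, map_add]
  rw [H.bimul_c_even _ _ _ _ F.g_mem, H.bimul_odd _ _ _ _ F.hy F.hy,
    H.bimul_b_even _ _ _ _ F.h_mem, H.bimul_b_even _ _ _ _ F.h_mem,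
    F.mul_y F.g_mem, F.y_mul F.g_mem, F.mul_y F.h_mem, F.y_mul F.h_mem]
  simp only [TensorProduct.tmul_smul, ← TensorProduct.smul_tmul', smul_smul]
  module

theorem Δ_gsq (F : Fr H y f) : H.Δ (gg H y f * gg H y f) =
    (gg H y f * gg H y f) ⊗ₜ[K] (gg H y f * gg H y f)
    + (sc H f (gg H y f) * (chi y f (gg H y f)^2 + psi y f (gg H y f)^2)) • (y ⊗ₜ[K] y)
    - (sc H f (gg H y f))^2 • ((y * y) ⊗ₜ[K] (y * y)) := by
  rw [H.Δ_mul, F.Δ_g]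
  simp only [TensorProduct.add_tmul, TensorProduct.tmul_add, map_add,
    ← TensorProduct.smul_tmul', TensorProduct.tmul_smul, map_smul]
  rw [H.bimul_c_even _ _ _ _ F.g_mem, H.bimul_odd _ _ _ _ F.hy F.hy,
    H.bimul_b_even _ _ _ _ F.g_mem, H.bimul_c_even _ _ _ _ F.g_mem,
    F.mul_y F.g_mem, F.y_mul F.g_mem]
  simp only [TensorProduct.tmul_smul, ← TensorProduct.smul_tmul', smul_smul]
  module

/-- bilinear form of the super multiplication -/
noncomputable def bm (H : HopfSuperalgebra K A) : A ⊗[K] A →ₗ[K] A ⊗[K] A →ₗ[K] A ⊗[K] A :=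
  TensorProduct.curry H.superBimul

theorem eq1 (F : Fr H y f) {a : A} (ha : a ∈ H.A₀) :
    rf (chi y f) (H.Δ a) * gg H y f - (sc H f a * psi y f (hh H y f)) • (y * y)
      = chi y f a • gg H y f := by
  have key := F.ext_even (rf f ∘ₗ (bm H).flip (H.Δ y))
    (LinearMap.mulRight K (gg H y f) ∘ₗ rf (chi y f) -
      psi y f (hh H y f) • (LinearMap.toSpanSingleton K A (y * y) ∘ₗ bf f f)) ?_ ?_
    (H.Δ_even _ ha)
  · have h2 : rf f ((bm H).flip (H.Δ y) (H.Δ a)) = chi y f a • gg H y f := by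
      have : (bm H).flip (H.Δ y) (H.Δ a) = H.Δ (a * y) := by
        rw [H.Δ_mul]; rfl
      rw [this, F.mul_y ha, map_smul, map_smul]; rfl
    rw [LinearMap.comp_apply, h2] at key
    rw [key]
    simp [sc, smul_smul, mul_comm]
  · intro a ha b hb
    simp only [bm, LinearMap.comp_apply, LinearMap.flip_apply, TensorProduct.curry_apply]
    rw [F.Δ_y, TensorProduct.tmul_add, map_add, H.bimul_c_even _ _ _ _ F.g_mem,
      H.bimul_b_even _ _ _ _ hb]
    simp [F.f0 _ (H.mul_mem₀₀ _ hb _ F.h_mem), F.f0 _ ha, chi]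
  · simp only [bm, LinearMap.comp_apply, LinearMap.flip_apply, TensorProduct.curry_apply]
    rw [F.Δ_y, TensorProduct.tmul_add, map_add, H.bimul_c_even _ _ _ _ F.g_mem,
      H.bimul_odd _ _ _ _ F.hy F.hy]
    simp [F.f0 _ F.yy_even, F.chi_y, F.fy, psi]

theorem eq2 (F : Fr H y f) {a : A} (ha : a ∈ H.A₀) :
    lf (chi y f) (H.Δ a) * hh H y f + (sc H f a * psi y f (gg H y f)) • (y * y)
      = chi y f a • hh H y f := by
  have key := F.ext_even (lf f ∘ₗ (bm H).flip (H.Δ y))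
    (LinearMap.mulRight K (hh H y f) ∘ₗ lf (chi y f) +
      psi y f (gg H y f) • (LinearMap.toSpanSingleton K A (y * y) ∘ₗ bf f f)) ?_ ?_
    (H.Δ_even _ ha)
  · have h2 : lf f ((bm H).flip (H.Δ y) (H.Δ a)) = chi y f a • hh H y f := by
      have : (bm H).flip (H.Δ y) (H.Δ a) = H.Δ (a * y) := by
        rw [H.Δ_mul]; rfl
      rw [this, F.mul_y ha, map_smul, map_smul]; rfl
    rw [LinearMap.comp_apply, h2] at key
    rw [key]
    simp [sc, smul_smul, mul_comm]
  · intro a ha b hb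
    simp only [bm, LinearMap.comp_apply, LinearMap.flip_apply, TensorProduct.curry_apply]
    rw [F.Δ_y, TensorProduct.tmul_add, map_add, H.bimul_c_even _ _ _ _ F.g_mem,
      H.bimul_b_even _ _ _ _ hb]
    simp [F.f0 _ (H.mul_mem₀₀ _ ha _ F.g_mem), F.f0 _ ha, chi]
  · simp only [bm, LinearMap.comp_apply, LinearMap.flip_apply, TensorProduct.curry_apply]
    rw [F.Δ_y, TensorProduct.tmul_add, map_add, H.bimul_c_even _ _ _ _ F.g_mem,
      H.bimul_odd _ _ _ _ F.hy F.hy]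
    simp [F.f0 _ F.yy_even, F.chi_y, F.fy, psi]

theorem eq3 (F : Fr H y f) {a : A} (ha : a ∈ H.A₀) :
    gg H y f * rf (psi y f) (H.Δ a) + (sc H f a * chi y f (hh H y f)) • (y * y)
      = psi y f a • gg H y f := by
  have key := F.ext_even (rf f ∘ₗ (bm H) (H.Δ y))
    (LinearMap.mulLeft K (gg H y f) ∘ₗ rf (psi y f) +
      chi y f (hh H y f) • (LinearMap.toSpanSingleton K A (y * y) ∘ₗ bf f f)) ?_ ?_
    (H.Δ_even _ ha)
  · have h2 : rf f ((bm H) (H.Δ y) (H.Δ a)) = psi y f a • gg H y f := by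
      have : (bm H) (H.Δ y) (H.Δ a) = H.Δ (y * a) := by
        rw [H.Δ_mul]; rfl
      rw [this, F.y_mul ha, map_smul, map_smul]; rfl
    rw [LinearMap.comp_apply, h2] at key
    rw [key]
    simp [sc, smul_smul, mul_comm]
  · intro a ha b hb
    simp only [bm, LinearMap.comp_apply, TensorProduct.curry_apply]
    rw [F.Δ_y, TensorProduct.add_tmul, map_add, H.bimul_c_even _ _ _ _ ha,
      H.bimul_c_even _ _ _ _ ha]
    simp [F.f0 _ (H.mul_mem₀₀ _ F.h_mem _ hb), F.f0 _ ha, psi]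
  · simp only [bm, LinearMap.comp_apply, TensorProduct.curry_apply]
    rw [F.Δ_y, TensorProduct.add_tmul, map_add, H.bimul_b_even _ _ _ _ F.h_mem,
      H.bimul_odd _ _ _ _ F.hy F.hy]
    simp [F.f0 _ F.yy_even, F.psi_y, F.fy, chi]

theorem eq4 (F : Fr H y f) {a : A} (ha : a ∈ H.A₀) :
    hh H y f * lf (psi y f) (H.Δ a) - (sc H f a * chi y f (gg H y f)) • (y * y)
      = psi y f a • hh H y f := by
  have key := F.ext_even (lf f ∘ₗ (bm H) (H.Δ y))
    (LinearMap.mulLeft K (hh H y f) ∘ₗ lf (psi y f) -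
      chi y f (gg H y f) • (LinearMap.toSpanSingleton K A (y * y) ∘ₗ bf f f)) ?_ ?_
    (H.Δ_even _ ha)
  · have h2 : lf f ((bm H) (H.Δ y) (H.Δ a)) = psi y f a • hh H y f := by
      have : (bm H) (H.Δ y) (H.Δ a) = H.Δ (y * a) := by
        rw [H.Δ_mul]; rfl
      rw [this, F.y_mul ha, map_smul, map_smul]; rfl
    rw [LinearMap.comp_apply, h2] at key
    rw [key]
    simp [sc, smul_smul, mul_comm]
  · intro a ha b hb
    simp only [bm, LinearMap.comp_apply, TensorProduct.curry_apply]
    rw [F.Δ_y, TensorProduct.add_tmul, map_add, H.bimul_c_even _ _ _ _ ha,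
      H.bimul_c_even _ _ _ _ ha]
    simp [F.f0 _ (H.mul_mem₀₀ _ F.g_mem _ ha), F.f0 _ ha, psi]
  · simp only [bm, LinearMap.comp_apply, TensorProduct.curry_apply]
    rw [F.Δ_y, TensorProduct.add_tmul, map_add, H.bimul_b_even _ _ _ _ F.h_mem,
      H.bimul_odd _ _ _ _ F.hy F.hy]
    simp [F.f0 _ F.yy_even, F.psi_y, F.fy, chi]

/-- antipode eigenvalue -/
noncomputable def lam (H : HopfSuperalgebra K A) (y : A) (f : A →ₗ[K] K) : K := f (H.antipode y)

theorem S_y (F : Fr H y f) : H.antipode y = lam H y f • y := F.sp _ (H.antipode_odd _ F.hy)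

theorem ant_y (F : Fr H y f) :
    chi y f (H.antipode (gg H y f)) + lam H y f * psi y f (hh H y f) = 0 := by
  have := H.antipode_left y
  rw [F.Δ_y] at this
  simp only [map_add, TensorProduct.map_tmul, LinearMap.mul'_apply, LinearMap.id_apply, F.S_y,
    H.ε_odd _ F.hy, map_zero, F.mul_y (H.antipode_even _ F.g_mem), smul_mul_assoc,
    F.y_mul F.h_mem, smul_smul, ← add_smul] at this
  exact F.y_inj (by rw [this, zero_smul])

theorem antL_g (F : Fr H y f) : H.antipode (gg H y f) * gg H y f
    + (sc H f (gg H y f) * lam H y f) • (y * y) = 1 := by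
  have := H.antipode_left (gg H y f)
  rw [F.Δ_g] at this
  simpa [F.S_y, smul_smul, F.ε_g] using this

theorem antR_g (F : Fr H y f) : gg H y f * H.antipode (gg H y f)
    + (sc H f (gg H y f) * lam H y f) • (y * y) = 1 := by
  have := H.antipode_right (gg H y f)
  rw [F.Δ_g] at this
  simpa [F.S_y, smul_smul, F.ε_g] using this

theorem conv_inv (F : Fr H y f) (hs : ∀ a ∈ H.A₀, sc H f a * chi y f (y * y) = 0) (a : A) :
    bf (chi y f ∘ₗ H.antipode) (chi y f) (H.Δ a) = H.ε a := by
  rw [← H.p_add a]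
  have hodd : ∀ b ∈ H.A₁, bf (chi y f ∘ₗ H.antipode) (chi y f) (H.Δ b) = H.ε b := by
    intro b hb
    rw [F.sp b hb]
    simp [F.Δ_y, F.S_y, F.chi_y, H.ε_odd _ F.hy]
  have heven : ∀ b ∈ H.A₀, bf (chi y f ∘ₗ H.antipode) (chi y f) (H.Δ b) = H.ε b := by
    intro b hb
    have key := F.ext_even (bf (chi y f ∘ₗ H.antipode) (chi y f))
      (chi y f ∘ₗ LinearMap.mul' K A ∘ₗ TensorProduct.map H.antipode LinearMap.id
        - (lam H y f * chi y f (y * y)) • bf f f) ?_ ?_ (H.Δ_even _ hb)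
    · rw [key]
      have h1 := hs b hb
      simp only [LinearMap.sub_apply, LinearMap.comp_apply, LinearMap.smul_apply,
        H.antipode_left, smul_eq_mul, Algebra.algebraMap_eq_smul_one, map_smul, F.chi_one]
      have h2 : bf f f (H.Δ b) = sc H f b := rfl
      rw [h2]
      linear_combination -lam H y f * h1
    · intro u hu v hv
      simp [F.f0 _ hu, F.chi_mul (H.antipode_even _ hu) hv]
    · simp [F.S_y, F.chi_y, F.fy]
  have e0 : H.p₀ a ∈ H.A₀ := by
    simp only [SuperAlgebra.p₀, LinearMap.comp_apply, Submodule.subtype_apply]; exact Subtype.prop _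
  have e1 : H.p₁ a ∈ H.A₁ := by
    simp only [SuperAlgebra.p₁, LinearMap.comp_apply, Submodule.subtype_apply]; exact Subtype.prop _
  simp only [map_add, heven _ e0, hodd _ e1]

theorem rf_rf (H : HopfSuperalgebra K A) (u v : A →ₗ[K] K) (a : A) :
    rf u (H.Δ (rf v (H.Δ a))) = rf (bf u v ∘ₗ H.Δ) (H.Δ a) := by
  have h1 : ∀ T : A ⊗[K] A, rf u (H.Δ (rf v T)) =
      rf u (e3 v (TensorProduct.assoc K A A A (TensorProduct.map H.Δ LinearMap.id T))) := by
    intro T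
    induction T with
    | zero => simp
    | tmul p q => simp [e3_assoc]
    | add p q hp hq => simp only [map_add, hp, hq]
  have h2 : ∀ W : A ⊗[K] A, u (rf v W) = bf u v W := by
    intro W
    induction W with
    | zero => simp
    | tmul p q => simp [mul_comm]
    | add p q hp hq => simp only [map_add, hp, hq]
  have h3 : ∀ T : A ⊗[K] A, rf u (e3 v (TensorProduct.map LinearMap.id H.Δ T)) =
      rf (bf u v ∘ₗ H.Δ) T := by
    intro T
    induction T with
    | zero => simp
    | tmul p q => simp [e3, h2]
    | add p q hp hq => simp only [map_add, hp, hq]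
  rw [h1, H.coassoc, h3]

theorem rf_inj (F : Fr H y f) (hs : ∀ a ∈ H.A₀, sc H f a * chi y f (y * y) = 0) (a : A)
    (h : rf (chi y f) (H.Δ a) = 0) : a = 0 := by
  have h1 := rf_rf H (chi y f ∘ₗ H.antipode) (chi y f) a
  have h2 : bf (chi y f ∘ₗ H.antipode) (chi y f) ∘ₗ H.Δ = H.ε :=
    LinearMap.ext (F.conv_inv hs)
  rw [h2, h, map_zero, map_zero] at h1
  have h3 := H.counit_right a
  rw [← h3, h1]; rfl

theorem not_all (F : Fr H y f) (h0 : Module.finrank K H.A₀ = 3)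
    (hs : ∀ a ∈ H.A₀, sc H f a * chi y f (y * y) = 0) : False := by
  set g := gg H y f with hg
  set c := y * y with hc
  have hcc : c * c = chi y f c • c := F.mul_yy F.yy_even
  -- g has a right inverse
  obtain ⟨g', hg'⟩ : ∃ g', g * g' = 1 := by
    refine ⟨H.antipode g * (1 + (sc H f g * lam H y f) • c), ?_⟩
    have h1 := F.antR_g
    rw [← hg, ← hc] at h1
    have h2 : g * H.antipode g = 1 - (sc H f g * lam H y f) • c := eq_sub_of_add_eq h1
    rw [← mul_assoc, h2]
    have h3 := hs g F.g_mem
    have h4 : sc H f g * lam H y f * (sc H f g * lam H y f) * chi y f c = 0 := by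
      linear_combination sc H f g * lam H y f ^ 2 * h3
    have h5 : ((sc H f g * lam H y f) • c) * ((sc H f g * lam H y f) • c) = 0 := by
      rw [smul_mul_smul_comm, hcc, smul_smul, h4, zero_smul]
    generalize (sc H f g * lam H y f) • c = u at h5
    have h6 : (1 - u) * (1 + u) = 1 - u * u := by noncomm_ring
    rw [h6, h5, sub_zero]
  let φ : A →ₗ[K] A := LinearMap.mulRight K g ∘ₗ rf (chi y f) ∘ₗ H.Δ
  have hφ : Function.Injective φ := by
    rw [injective_iff_map_eq_zero]
    intro a ha
    apply F.rf_inj hs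
    have : rf (chi y f) (H.Δ a) * g * g' = 0 := by
      have h : rf (chi y f) (H.Δ a) * g = 0 := ha
      rw [h, zero_mul]
    rwa [mul_assoc, hg', mul_one] at this
  have hle : H.A₀.map φ ≤ Submodule.span K {g, c} := by
    rintro _ ⟨a, ha, rfl⟩
    have h1 := F.eq1 ha
    have h2 : φ a = chi y f a • g + (sc H f a * psi y f (hh H y f)) • c := by
      rw [← h1]; simp [φ, hg, hc]
    rw [h2]
    exact Submodule.add_mem _ (Submodule.smul_mem _ _ (Submodule.subset_span (by simp)))
      (Submodule.smul_mem _ _ (Submodule.subset_span (by simp)))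
  have hfin : Module.finrank K (H.A₀.map φ) = 3 := by
    rw [← h0]; exact (LinearEquiv.finrank_eq (Submodule.equivMapOfInjective φ hφ _)).symm
  have : FiniteDimensional K (Submodule.span K ({g, c} : Set A)) :=
    FiniteDimensional.span_of_finite K (Set.toFinite _)
  have h5 := Submodule.finrank_mono hle
  have h6 : Module.finrank K (Submodule.span K ({g, c} : Set A)) ≤ 2 := by
    classical
    have := finrank_span_finset_le_card (R := K) ({g, c} : Finset A)
    have h7 := Finset.card_le_two (a := g) (b := c)
    simp only [Finset.coe_insert, Finset.coe_singleton] at this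
    exact this.trans h7
  omega

theorem main1 [CharZero K] (F : Fr H y f) (h0 : Module.finrank K H.A₀ = 3)
    (h1 : chi y f (y * y) = 1) :
    ∃ (x : A) (α : K), α ^ 2 = -1 ∧
      x ∈ H.A₀ ∧
      x * x + y * y = 1 ∧ x * y = 0 ∧ y * x = 0 ∧
      H.A₀ = Submodule.span K {1, x, x * x} ∧
      H.Δ x = x ⊗ₜ[K] x - α • (y ⊗ₜ[K] y) ∧
      H.Δ y = x ⊗ₜ[K] y + y ⊗ₜ[K] x ∧
      H.ε x = 1 ∧ 
      H.antipode x = x ∧ H.antipode y = α • y := by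
  have hpsi : ∀ a ∈ H.A₀, psi y f a = chi y f a := by
    intro a ha
    have e1 : (y * y) * a * (y * y) = psi y f a • (y * y) := by
      rw [F.yy_mul ha, smul_mul_assoc, F.mul_yy F.yy_even, h1, one_smul]
    have e2 : (y * y) * a * (y * y) = chi y f a • (y * y) := by
      rw [mul_assoc, F.mul_yy ha, mul_smul_comm, F.mul_yy F.yy_even, h1, one_smul]
    have := congrArg (chi y f) (e1.symm.trans e2)
    simpa [h1] using this
  have hpsi' : rf (psi y f) = rf (chi y f) ∧ lf (psi y f) = lf (chi y f) := by
    have : psi y f = chi y f := by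
      ext a
      rw [← H.p_add a]
      have e0 : H.p₀ a ∈ H.A₀ := by
        simp only [SuperAlgebra.p₀, LinearMap.comp_apply, Submodule.subtype_apply]
        exact Subtype.prop _
      have e1 : H.p₁ a ∈ H.A₁ := by
        simp only [SuperAlgebra.p₁, LinearMap.comp_apply, Submodule.subtype_apply]
        exact Subtype.prop _
      rw [map_add, map_add, hpsi _ e0, F.sp _ e1, map_smul, map_smul, F.chi_y, F.psi_y]
    rw [this]; exact ⟨rfl, rfl⟩
  obtain ⟨a, ha, hsa⟩ : ∃ a ∈ H.A₀, sc H f a ≠ 0 := by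
    by_contra! hcon
    exact F.not_all h0 (fun a ha => by rw [hcon a ha, zero_mul])
  have memR : ∀ a ∈ H.A₀, rf (chi y f) (H.Δ a) ∈ H.A₀ := by
    intro a ha
    have := F.ext_even (H.A₀.mkQ ∘ₗ rf (chi y f)) 0 ?_ ?_ (H.Δ_even _ ha)
    · simpa using this
    · intro a ha b hb
      have := H.A₀.smul_mem (chi y f b) ha
      simp [(Submodule.Quotient.mk_eq_zero H.A₀).2 ha]
    · simp [F.chi_y]
  have memL : ∀ a ∈ H.A₀, lf (chi y f) (H.Δ a) ∈ H.A₀ := by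
    intro a ha
    have := F.ext_even (H.A₀.mkQ ∘ₗ lf (chi y f)) 0 ?_ ?_ (H.Δ_even _ ha)
    · simpa using this
    · intro a ha b hb
      simp [(Submodule.Quotient.mk_eq_zero H.A₀).2 hb]
    · simp [F.chi_y]
  have two : (2 : K) ≠ 0 := two_ne_zero
  have hη : chi y f (hh H y f) = 0 := by
    have q1 := congrArg (chi y f) (F.eq1 ha)
    have q3 := congrArg (chi y f) (F.eq3 ha)
    rw [hpsi'.1] at q3
    simp only [map_sub, map_add, map_smul, F.chi_mul (memR a ha) F.g_mem,
      F.chi_mul F.g_mem (memR a ha), h1, hpsi _ F.h_mem, hpsi _ ha, smul_eq_mul] at q1 q3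
    have : 2 * sc H f a * chi y f (hh H y f) = 0 := by linear_combination q3 - q1
    simpa [two, hsa] using this
  have hγ : chi y f (gg H y f) = 0 := by
    have q1 := congrArg (chi y f) (F.eq2 ha)
    have q3 := congrArg (chi y f) (F.eq4 ha)
    rw [hpsi'.2] at q3
    simp only [map_sub, map_add, map_smul, F.chi_mul (memL a ha) F.h_mem,
      F.chi_mul F.h_mem (memL a ha), h1, hpsi _ F.g_mem, hpsi _ ha, smul_eq_mul] at q1 q3
    have : 2 * sc H f a * chi y f (gg H y f) = 0 := by linear_combination q1 - q3
    simpa [two, hsa] using this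
  have hψη := (hpsi _ F.h_mem).trans hη
  have hψγ := (hpsi _ F.g_mem).trans hγ
  have hΔc := F.Δ_yy
  rw [hγ, hη] at hΔc
  simp only [mul_zero, zero_mul, sub_zero, zero_smul, add_zero] at hΔc
  have hg3 := F.eq1 F.yy_even
  have hsc : sc H f (y * y) = 0 := by
    simp [sc, hΔc, F.f0 _ F.yy_even]
  rw [hsc, hΔc, h1] at hg3
  simp only [map_add, rf_tmul, h1, F.chi_mul F.h_mem F.h_mem, hη, mul_zero, zero_mul, zero_smul,
    one_smul, add_zero, sub_zero] at hg3
  have hL := F.antL_g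
  have hR := F.antR_g
  have hay := F.ant_y
  have hΔy := F.Δ_y
  have hΔg := F.Δ_g
  have hΔgg := F.Δ_gsq
  have hSg := H.antipode_even _ F.g_mem
  have hscg := F.sc_hg
  have hgc := F.mul_yy F.g_mem
  have hcg := F.yy_mul F.g_mem
  have hgy := F.mul_y F.g_mem
  have hyg := F.y_mul F.g_mem
  have hgm := F.g_mem
  have hhm := F.h_mem
  have hεg := F.ε_g
  have hεh := F.ε_h
  have hSc := F.mul_yy hSg
  generalize gg H y f = g at *
  generalize hh H y f = h at *
  rw [hψη, mul_zero, add_zero] at hay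
  rw [hay, zero_smul] at hSc
  rw [hψγ, zero_smul] at hcg hyg
  rw [hγ, zero_smul] at hgc hgy
  have hsl : sc H f g * lam H y f = 1 := by
    have := congrArg (chi y f) hL
    simpa [F.chi_mul hSg hgm, hγ, h1, F.chi_one] using this
  rw [hsl, one_smul] at hL hR
  have hgg : g * g = 1 - y * y := by
    have e : g * g * (g * H.antipode g) = g * H.antipode g := by
      rw [← mul_assoc, hg3]
    rw [eq_sub_of_add_eq hR, mul_sub, mul_one, mul_assoc g g, hgc, mul_zero, sub_zero] at e
    exact e
  have hSgg : H.antipode g = g := by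
    have e : H.antipode g * g * g = H.antipode g := by
      rw [mul_assoc, hgg, mul_sub, mul_one, hSc, sub_zero]
    rw [← e, eq_sub_of_add_eq hL, sub_mul, one_mul, hcg, sub_zero]
  have hs2 : sc H f g ^ 2 = -1 := by
    have e1 := congrArg (bf (chi y f) (chi y f)) hΔgg
    rw [hgg, map_sub, H.Δ_one, hΔc] at e1
    simp [F.chi_one, F.chi_y, F.chi_mul hgm hgm, F.chi_mul hhm hhm, hγ, hη, h1] at e1
    linear_combination e1
  have hsg0 : sc H f g ≠ 0 := by
    rintro h; rw [h] at hs2; norm_num at hs2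
  have hsc1 : sc H f 1 = 0 := by simp [sc, H.Δ_one, F.f0 _ H.one_mem]
  have hscgg : sc H f (g * g) = 0 := by rw [hgg, map_sub, hsc1, hsc, sub_zero]
  have hχgg : chi y f (g * g) = 0 := by rw [F.chi_mul hgm hgm, hγ, zero_mul]
  have hεgg : H.ε (g * g) = 1 := by rw [H.ε_mul, hεg, one_mul]
  have hli : LinearIndependent K ![(1 : A), g, g * g] := by
    rw [Fintype.linearIndependent_iff]
    intro k hk
    simp only [Fin.sum_univ_three, Matrix.cons_val_zero, Matrix.cons_val_one, Matrix.cons_val] at hk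
    have a1 := congrArg (chi y f) hk
    have a2 := congrArg (sc H f) hk
    have a3 := congrArg H.ε hk
    simp [F.chi_one, hγ, hχgg] at a1
    simp [hsc1, hscgg, hsg0] at a2
    simp [H.ε_one, hεg, hεgg, a1, a2] at a3
    intro i
    fin_cases i
    exacts [a1, a2, a3]
  have hspan : H.A₀ = Submodule.span K {1, g, g * g} := by
    symm
    have hfd : FiniteDimensional K H.A₀ := FiniteDimensional.of_finrank_pos (by omega)
    apply Submodule.eq_of_le_of_finrank_eq
    · rw [Submodule.span_le]
      rintro z (rfl | rfl | rfl)
      exacts [H.one_mem, hgm, H.mul_mem₀₀ _ hgm _ hgm]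
    · have := finrank_span_eq_card hli
      rw [h0]
      have hr : Set.range ![(1 : A), g, g * g] = {1, g, g * g} := by
        ext z
        simp only [Set.mem_range, Fin.exists_fin_succ, Set.mem_insert_iff,
          Set.mem_singleton_iff]
        simp [eq_comm]
      rw [hr] at this
      simpa using this
  have hhg : h = g := by
    have hm := hhm
    rw [hspan] at hm
    simp only [Submodule.mem_span_insert, Submodule.mem_span_singleton] at hm
    obtain ⟨k0, _, ⟨k1, _, ⟨k2, rfl⟩, rfl⟩, hk⟩ := hm
    have a1 := congrArg (chi y f) hk
    have a2 := congrArg (sc H f) hk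
    have a3 := congrArg H.ε hk
    simp [F.chi_one, hγ, hχgg, hη] at a1
    simp [hsc1, hscgg, hscg, hsg0] at a2
    simp [H.ε_one, hεg, hεgg, hεh] at a3
    have b2 : k2 = 0 := by grind
    have b1 : k1 = 1 := by grind
    have b0 : k0 = 0 := by grind
    rw [hk, b0, b1, b2]; simp
  have hlam : lam H y f = - sc H f g := by
    apply mul_left_cancel₀ hsg0
    rw [hsl]; linear_combination hs2
  refine ⟨g, - sc H f g, by rw [neg_sq, hs2], hgm, by rw [hgg]; abel, hgy, hyg, hspan, ?_, ?_,
    hεg, hSgg, ?_⟩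
  · rw [hΔg, neg_smul, sub_neg_eq_add]
  · rw [hΔy, hhg]
  · rw [F.S_y, hlam]

end Fr

end Helpers

/-- every non-trivial 4-dimensional Hopf superalgebra with 3-dimensional
even part is isomorphic to `H₅ = K[x,y]/(x² + y² - 1, xy)` with `x` even, `y` odd,
`Δ(x) = x ⊗ x - α y ⊗ y`, `Δ(y) = x ⊗ y + y ⊗ x`, `ε(x) = 1`, `ε(y) = 0`,
`S(x) = x`, `S(y) = α y`, where `α` is a primitive fourth root of unity. -/
theorem four_dim_hopf_superalgebra_even_dim_three_classification
    {K A : Type*} [Field K] [IsAlgClosed K] [CharZero K] [Ring A] [Algebra K A]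
    (H : HopfSuperalgebra K A)
    (hA : Module.finrank K A = 4)
    (h0 : Module.finrank K H.A₀ = 3)
    (hnt : H.A₁ ≠ ⊥) :
    ∃ (x y : A) (α : K), α ^ 2 = -1 ∧
      x ∈ H.A₀ ∧ y ∈ H.A₁ ∧
      x * x + y * y = 1 ∧ x * y = 0 ∧ y * x = 0 ∧
      H.A₀ = Submodule.span K {1, x, x * x} ∧
      H.A₁ = Submodule.span K {y} ∧
      H.Δ x = x ⊗ₜ[K] x - α • (y ⊗ₜ[K] y) ∧
      H.Δ y = x ⊗ₜ[K] y + y ⊗ₜ[K] x ∧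
      H.ε x = 1 ∧ H.ε y = 0 ∧
      H.antipode x = x ∧ H.antipode y = α • y := by
  have hfd : FiniteDimensional K A := FiniteDimensional.of_finrank_pos (by omega)
  have h1 : Module.finrank K H.A₁ = 1 := by
    have := Submodule.finrank_add_eq_of_isCompl H.compl
    omega
  obtain ⟨y, hy, hy0⟩ := Submodule.exists_mem_ne_zero_of_ne_bot hnt
  have hfr : ∀ y ∈ H.A₁, y ≠ 0 → ∃ f : A →ₗ[K] K, Fr H y f := by
    intro y hy hy0
    have hsp : ∀ a ∈ H.A₁, ∃ k : K, k • y = a := by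
      intro a ha
      obtain ⟨k, hk⟩ := exists_smul_eq_of_finrank_eq_one h1
        (x := (⟨y, hy⟩ : H.A₁)) (fun h => hy0 (congrArg Subtype.val h)) ⟨a, ha⟩
      exact ⟨k, congrArg Subtype.val hk⟩
    choose k hk using hsp
    have hk_uniq : ∀ a b : K, a • y = b • y → a = b := fun a b hab => smul_left_injective K hy0 hab
    have hp : ∀ a, H.p₁ a ∈ H.A₁ := fun a => by
      simp only [SuperAlgebra.p₁, LinearMap.comp_apply, Submodule.subtype_apply]
      exact Subtype.prop _
    refine ⟨{ toFun := fun a => k (H.p₁ a) (hp a)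
              map_add' := fun a b => hk_uniq _ _ (by simp only [add_smul, hk, map_add])
              map_smul' := fun r a => hk_uniq _ _ (by
                simp only [RingHom.id_apply, smul_eq_mul, mul_smul, hk, map_smul]) }, ?_⟩
    refine ⟨hy, fun a ha => hk_uniq _ _ ?_, hk_uniq _ _ ?_, fun a ha => ?_⟩
    · simp [hk, H.p₁_even ha]
    · simp [hk, H.p₁_odd hy]
    · simp [hk, H.p₁_odd ha]
  obtain ⟨f, F⟩ := hfr y hy hy0
  have hk : Fr.chi y f (y * y) ≠ 0 := fun hk =>
    F.not_all h0 (fun a _ => by rw [hk, mul_zero])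
  obtain ⟨m, hm⟩ := IsAlgClosed.exists_pow_nat_eq (Fr.chi y f (y * y))⁻¹ (n := 2) (by norm_num)
  have hm0 : m ≠ 0 := by
    rintro rfl
    have : (Fr.chi y f (y * y))⁻¹ ≠ 0 := inv_ne_zero hk
    rw [← hm] at this; simp at this
  have hz : m • y ∈ H.A₁ := H.A₁.smul_mem _ hy
  obtain ⟨f2, F2⟩ := hfr (m • y) hz (smul_ne_zero hm0 hy0)
  have hone : Fr.chi (m • y) f2 ((m • y) * (m • y)) = 1 := by
    apply F2.y_inj
    rw [← F2.mul_y F2.yy_even]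
    simp only [smul_mul_assoc, mul_smul_comm, F.mul_y F.yy_even, smul_smul]
    congr 1
    field_simp at hm ⊢
    linear_combination hm
  obtain ⟨x, α, k1, k2, k3, k4, k5, k6, k7, k8, k9, k10, k11⟩ := F2.main1 h0 hone
  refine ⟨x, m • y, α, k1, k2, hz, k3, k4, k5, k6, ?_, k7, k8, k9, H.ε_odd _ hz, k10, k11⟩
  apply le_antisymm
  · intro a ha
    rw [F2.sp a ha]
    exact Submodule.smul_mem _ _ (Submodule.mem_span_singleton_self _)
  · rw [Submodule.span_singleton_le_iff_mem]; exact hz
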